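/- For every κ > 0 and μ > 0 with T/μ → 0, the quantity m_μ^{(κ)}(T) = (1/(4π)) ∫_{ℝ³} ( 1/K_{T,μ}(p) − 1/(p² + κ²μ) ) dp satisfies m_μ^{(κ)}(T) = √μ ( log(μ/T) + γ − 2 + log(8/π) + κπ/2 + o(1) ), where γ is the Euler–Mascheroni constant. -/

import Mathlib

open MeasureTheory Filter Topology

noncomputable section

abbrev E3 := EuclideanSpace ℝ (Fin 3)

/-- The BCS kernel `K_{T,μ}(p) = |p² − μ| / tanh(|p² − μ|/(2T))`, extended by
continuity to equal `2T` when `p² = μ`. -/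
def Kfun (T μ : ℝ) (p : E3) : ℝ :=
  if ‖p‖ ^ 2 = μ then 2 * T
  else |‖p‖ ^ 2 - μ| / Real.tanh (|‖p‖ ^ 2 - μ| / (2 * T))

/-- `m_μ^{(κ)}(T) = (1/(4π)) ∫ (1/K_{T,μ}(p) − 1/(p² + κ²μ)) dp`. -/
def mFun (T μ κ : ℝ) : ℝ :=
  (1 / (4 * Real.pi)) *
    ∫ p : E3, (1 / Kfun T μ p - 1 / (‖p‖ ^ 2 + κ ^ 2 * μ))

/-!
After rescaling `p → √μ p`, the radial integral depends on `T` and `μ` only through `a = μ / (2T)`,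
and `tanh` regularises the pole of `p² / (p² - 1)` at `p = 1` on the scale `1 / a`. Near the pole
the weight `p²` is replaced by `p`, for which the substitution `x = p² - 1` gives exactly
`∫₀ᵃ tanh u / u du`; the correction, and the integral away from the pole, are dominated uniformly in
`a` and converge to elementary integrals. The identity `tanh u = (1 - e⁻²ᵘ) - e⁻²ᵘ tanh u` splits
`∫₀ᵃ tanh u / u du` into the entire exponential integral `Ein (2a) = log (2a) + γ + o(1)`, where `γ`
enters as `-Γ'(1)`, and a convergent integral equal to `log (π / 2)`: expanding it in powers of
`e⁻²ᵘ` gives Frullani integrals, which are the logarithms of the factors of Wallis' product.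
-/

section

open Real Set

theorem continuous_dslope {𝕜 E : Type*} [NontriviallyNormedField 𝕜] [NormedAddCommGroup E]
    [NormedSpace 𝕜 E] {f : 𝕜 → E} {a : 𝕜} (hf : Continuous f) (ha : DifferentiableAt 𝕜 f a) :
    Continuous (dslope f a) :=
  continuousOn_univ.1 ((continuousOn_dslope univ_mem).2 ⟨hf.continuousOn, ha⟩)

theorem hasDerivAt_tanh (x : ℝ) : HasDerivAt tanh (1 / cosh x ^ 2) x := by
  have h := (hasDerivAt_sinh x).div (hasDerivAt_cosh x) (cosh_pos x).ne'
  rw [show sinh / cosh = tanh from funext fun y => (tanh_eq_sinh_div_cosh y).symm] at h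
  exact h.congr_deriv (by rw [← cosh_sq_sub_sinh_sq x]; ring)

@[fun_prop]
theorem continuous_tanh : Continuous tanh :=
  continuous_iff_continuousAt.2 fun x => (hasDerivAt_tanh x).continuousAt

theorem one_sub_tanh (x : ℝ) : 1 - tanh x = exp (-2 * x) * (1 + tanh x) := by
  have h : exp (-2 * x) = exp (-x) / exp x := by rw [← exp_sub]; ring_nf
  rw [tanh_eq, h]
  have := exp_pos x
  have := exp_pos (-x)
  field_simp
  ring

theorem one_sub_tanh_le_inv {x : ℝ} (hx : 0 < x) : 1 - tanh x ≤ x⁻¹ :=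
  calc 1 - tanh x ≤ exp (-2 * x) * 2 := by
        rw [one_sub_tanh]
        gcongr
        linarith [tanh_lt_one x]
    _ ≤ x⁻¹ := by
        rw [neg_mul, exp_neg, ← div_eq_inv_mul, div_le_iff₀ (exp_pos _), ← div_eq_inv_mul,
          le_div_iff₀ hx]
        linarith [add_one_le_exp (2 * x)]

theorem tendsto_tanh_atTop : Tendsto tanh atTop (𝓝 1) := by
  have h : Tendsto (fun x : ℝ => 1 - x⁻¹) atTop (𝓝 1) := by
    simpa using tendsto_inv_atTop_zero.const_sub (1 : ℝ)
  refine tendsto_of_tendsto_of_tendsto_of_le_of_le' h tendsto_const_nhds ?_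
    (Eventually.of_forall fun x => (tanh_lt_one x).le)
  filter_upwards [eventually_gt_atTop 0] with x hx
  linarith [one_sub_tanh_le_inv hx]

theorem tendsto_tanh_mul_atTop (x : ℝ) :
    Tendsto (fun a => tanh (a * x)) atTop (𝓝 (Real.sign x)) := by
  rcases lt_trichotomy x 0 with hx | rfl | hx
  · have h := (tendsto_tanh_atTop.comp (tendsto_id.atTop_mul_const (neg_pos.2 hx))).neg
    simpa [sign_of_neg hx, Function.comp_def] using h
  · simp
  · rw [sign_of_pos hx]
    exact tendsto_tanh_atTop.comp (tendsto_id.atTop_mul_const hx)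

theorem tendsto_integral_mul_tanh {α : Type*} [MeasurableSpace α] {m : Measure α} {f g : α → ℝ}
    (hf : Integrable f m) (hg : AEStronglyMeasurable g m) :
    Tendsto (fun a => ∫ x, f x * tanh (a * g x) ∂m) atTop (𝓝 (∫ x, f x * Real.sign (g x) ∂m)) := by
  refine tendsto_integral_filter_of_dominated_convergence (fun x => ‖f x‖)
    (Eventually.of_forall fun a => ?_) (Eventually.of_forall fun a => ae_of_all _ fun x => ?_)
    hf.norm (ae_of_all _ fun x => (tendsto_tanh_mul_atTop (g x)).const_mul (f x))
  · exact hf.1.mul (continuous_tanh.comp_aestronglyMeasurable (hg.const_mul a))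
  · rw [norm_mul]
    exact mul_le_of_le_one_right (norm_nonneg _) (abs_tanh_lt_one _).le

/-- The function `x ↦ tanh x / x`, with value `1` at `0`; the hyperbolic analogue of `Real.sinc`.
Encoding it as a `dslope` makes it continuous on all of `ℝ`, so that `1 / K_{T,μ}` can be written
without a case distinction on the sphere `p² = μ`. -/
def tanhc : ℝ → ℝ := dslope tanh 0

@[fun_prop]
theorem continuous_tanhc : Continuous tanhc :=
  continuous_dslope continuous_tanh (hasDerivAt_tanh 0).differentiableAt

theorem tanhc_zero : tanhc 0 = 1 := by
  rw [tanhc, dslope_same, (hasDerivAt_tanh 0).deriv, cosh_zero]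
  norm_num

theorem mul_tanhc (x : ℝ) : x * tanhc x = tanh x := by
  simpa [tanhc] using sub_smul_dslope tanh 0 x

theorem tanhc_of_ne_zero {x : ℝ} (hx : x ≠ 0) : tanhc x = tanh x / x :=
  eq_div_of_mul_eq hx (by rw [mul_comm, mul_tanhc])

theorem tanhc_neg (x : ℝ) : tanhc (-x) = tanhc x := by
  obtain rfl | hx := eq_or_ne x 0
  · rw [neg_zero]
  · rw [tanhc_of_ne_zero hx, tanhc_of_ne_zero (neg_ne_zero.2 hx), tanh_neg, neg_div_neg_eq]

theorem mul_tanhc_mul {x : ℝ} (hx : x ≠ 0) (c : ℝ) : c * tanhc (c * x) = tanh (c * x) / x :=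
  eq_div_of_mul_eq hx (by rw [mul_right_comm, mul_tanhc])

theorem integrableOn_log_mul_exp_neg :
    IntegrableOn (fun u : ℝ => log u * exp (-u)) (Ioi 0) := by
  rw [← Ioc_union_Ioi_eq_Ioi zero_le_one]
  refine IntegrableOn.union ?_ ?_
  · have h : IntegrableOn log (Ioc 0 1) :=
      (intervalIntegrable_iff_integrableOn_Ioc_of_le zero_le_one).1
        intervalIntegral.intervalIntegrable_log'
    refine h.mul_bdd (c := 1) (by fun_prop) ((ae_restrict_iff' measurableSet_Ioc).2 <|
      ae_of_all _ fun u hu => ?_)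
    rw [norm_of_nonneg (exp_pos _).le, exp_le_one_iff]
    exact neg_nonpos.2 hu.1.le
  · have h : IntegrableOn (fun u : ℝ => u * exp (-u)) (Ioi 1) := by
      refine ((GammaIntegral_convergent zero_lt_two).mono_set
        (Ioi_subset_Ioi zero_le_one)).congr_fun (fun u _ => ?_) measurableSet_Ioi
      norm_num [mul_comm]
    refine Integrable.mono' h (by fun_prop) ((ae_restrict_iff' measurableSet_Ioi).2 <|
      ae_of_all _ fun u (hu : 1 < u) => ?_)
    rw [norm_of_nonneg (mul_nonneg (log_nonneg hu.le) (exp_pos _).le)]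
    gcongr
    exact log_le_self (zero_le_one.trans hu.le)

theorem integral_log_mul_exp_neg :
    ∫ u in Ioi (0 : ℝ), log u * exp (-u) = -eulerMascheroniConstant := by
  -- Both sides are `Γ'(1)`.
  have hGamma : Complex.GammaIntegral =ᶠ[𝓝 1] Complex.Gamma := by
    filter_upwards [(isOpen_lt continuous_const Complex.continuous_re).mem_nhds
      (show (0 : ℝ) < (1 : ℂ).re by simp)] with s hs
    exact (Complex.Gamma_eq_integral hs).symm
  have h := (Complex.hasDerivAt_GammaIntegral (s := 1) (by simp)).unique
    (Complex.hasDerivAt_Gamma_one.congr_of_eventuallyEq hGamma)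
  simp only [sub_self, Complex.cpow_zero, one_mul, ← Complex.ofReal_mul,
    integral_complex_ofReal] at h
  exact_mod_cast h

/-- The function `u ↦ (1 - e⁻ᵘ) / u`, with value `1` at `0`, whose primitive is the entire
exponential integral `Ein`. -/
def einKernel : ℝ → ℝ := dslope (fun u => -exp (-u)) 0

@[fun_prop]
theorem continuous_einKernel : Continuous einKernel :=
  continuous_dslope (by fun_prop) (by fun_prop)

theorem einKernel_zero : einKernel 0 = 1 := by
  rw [einKernel, dslope_same, (hasDerivAt_neg 0).exp.fun_neg.deriv]
  simp

theorem mul_einKernel (u : ℝ) : u * einKernel u = 1 - exp (-u) := by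
  have h := sub_smul_dslope (fun u : ℝ => -exp (-u)) 0 u
  simp only [sub_zero, smul_eq_mul, neg_zero, exp_zero] at h
  rw [einKernel, h]
  ring

theorem hasDerivAt_one_sub_exp_neg_mul_log {u : ℝ} (hu : u ≠ 0) :
    HasDerivAt (fun u => (1 - exp (-u)) * log u) (log u * exp (-u) + einKernel u) u := by
  have h := (((hasDerivAt_neg u).exp).const_sub 1).mul (hasDerivAt_log hu)
  refine h.congr_deriv ?_
  rw [← mul_einKernel u]
  field_simp

theorem continuous_one_sub_exp_neg_mul_log :
    Continuous fun u : ℝ => (1 - exp (-u)) * log u := by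
  refine (continuous_mul_log.mul continuous_einKernel).congr fun u => ?_
  rw [← mul_einKernel]
  exact mul_right_comm u (log u) (einKernel u)

theorem integral_einKernel {x : ℝ} (hx : 0 ≤ x) :
    ∫ u in 0..x, einKernel u = (1 - exp (-x)) * log x - ∫ u in 0..x, log u * exp (-u) := by
  have hlog : IntervalIntegrable (fun u => log u * exp (-u)) volume 0 x :=
    intervalIntegral.intervalIntegrable_log'.mul_continuousOn (by fun_prop)
  have hein : IntervalIntegrable einKernel volume 0 x :=
    continuous_einKernel.intervalIntegrable 0 x
  have h := intervalIntegral.integral_eq_sub_of_hasDerivAt_of_le hx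
    continuous_one_sub_exp_neg_mul_log.continuousOn
    (fun u hu => hasDerivAt_one_sub_exp_neg_mul_log hu.1.ne') (hlog.add hein)
  rw [intervalIntegral.integral_add hlog hein, log_zero, mul_zero] at h
  linarith

theorem tendsto_exp_neg_mul_log_atTop : Tendsto (fun x => exp (-x) * log x) atTop (𝓝 0) := by
  have h : Tendsto (fun x : ℝ => x * exp (-x)) atTop (𝓝 0) := by
    simpa using tendsto_pow_mul_exp_neg_atTop_nhds_zero 1
  refine squeeze_zero' ?_ ?_ h
  · filter_upwards [eventually_ge_atTop 1] with x hx
    exact mul_nonneg (exp_pos _).le (log_nonneg hx)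
  · filter_upwards [eventually_ge_atTop 0] with x hx
    rw [mul_comm]
    gcongr
    exact log_le_self hx

theorem tendsto_integral_einKernel_sub_log :
    Tendsto (fun x => (∫ u in 0..x, einKernel u) - log x) atTop (𝓝 eulerMascheroniConstant) := by
  have h := (intervalIntegral_tendsto_integral_Ioi 0 integrableOn_log_mul_exp_neg tendsto_id).add
    tendsto_exp_neg_mul_log_atTop
  rw [integral_log_mul_exp_neg, add_zero] at h
  rw [← neg_neg eulerMascheroniConstant]
  refine h.neg.congr' ?_
  filter_upwards [eventually_ge_atTop 0] with x hx
  rw [integral_einKernel hx, id]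
  ring

/-- The integrand of Frullani's integral for `exp (-·)` with scales `α` and `β`. -/
def frullaniExp (α β u : ℝ) : ℝ := u⁻¹ * (exp (-(α * u)) - exp (-(β * u)))

theorem integrableOn_frullaniExp {α β : ℝ} (hα : 0 < α) (hβ : 0 < β) :
    IntegrableOn (frullaniExp α β) (Ioi 0) := by
  wlog hαβ : α ≤ β generalizing α β
  · refine (this hβ hα (le_of_not_ge hαβ)).neg.congr (ae_of_all _ fun u => ?_)
    simp only [Pi.neg_apply, frullaniExp]
    ring
  unfold frullaniExp
  refine Integrable.mono' ((exp_neg_integrableOn_Ioi 0 hα).const_mul (β - α)) (by fun_prop)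
    ((ae_restrict_iff' measurableSet_Ioi).2 <| ae_of_all _ fun u (hu : 0 < u) => ?_)
  have hle : exp (-(β * u)) ≤ exp (-(α * u)) := by gcongr
  have hexp : exp (-(β * u)) = exp (-(α * u)) * exp (-((β - α) * u)) := by
    rw [← exp_add]; ring_nf
  rw [norm_of_nonneg (mul_nonneg (inv_nonneg.2 hu.le) (sub_nonneg.2 hle)), inv_mul_le_iff₀ hu,
    neg_mul]
  calc exp (-(α * u)) - exp (-(β * u)) = exp (-(α * u)) * (1 - exp (-((β - α) * u))) := by
        rw [hexp]; ring
    _ ≤ exp (-(α * u)) * ((β - α) * u) := by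
        gcongr
        linarith [one_sub_le_exp_neg ((β - α) * u)]
    _ = u * ((β - α) * exp (-(α * u))) := by ring

theorem integral_frullaniExp {α β : ℝ} (hα : 0 < α) (hβ : 0 < β) :
    ∫ u in Ioi 0, frullaniExp α β u = log (β / α) := by
  have hcont : Continuous fun u : ℝ => exp (-u) := by fun_prop
  have h := Frullani.integral_Ioi_eq (hcont.continuousOn.locallyIntegrableOn measurableSet_Ioi)
    hα hβ ((hcont.tendsto 0).mono_left nhdsWithin_le_nhds) tendsto_exp_neg_atTop_nhds_zero
    (integrableOn_frullaniExp hα hβ)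
  simpa [frullaniExp] using h

/-- The `j`-th term of the expansion of `exp (-2 * u) * tanhc u` in powers of `exp (-2 * u)`,
grouped so that it is nonnegative and its integral is the logarithm of a Wallis factor. -/
def wallisTerm (j : ℕ) (u : ℝ) : ℝ :=
  frullaniExp (2 * (2 * j + 1)) (2 * (2 * j + 2)) u -
    frullaniExp (2 * (2 * j + 2)) (2 * (2 * j + 3)) u

theorem wallisTerm_eq (j : ℕ) (u : ℝ) :
    wallisTerm j u =
      u⁻¹ * (exp (-2 * u) * (1 - exp (-2 * u)) ^ 2) * (exp (-2 * u) ^ 2) ^ j := by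
  have hpow (n : ℕ) : exp (-(2 * n * u)) = exp (-2 * u) ^ n := by
    rw [← exp_nat_mul]; ring_nf
  have h₁ := hpow (2 * j + 1)
  have h₂ := hpow (2 * j + 2)
  have h₃ := hpow (2 * j + 3)
  push_cast at h₁ h₂ h₃
  rw [wallisTerm, frullaniExp, frullaniExp, h₁, h₂, h₃]
  ring

theorem wallisTerm_nonneg (j : ℕ) {u : ℝ} (hu : 0 ≤ u) : 0 ≤ wallisTerm j u := by
  rw [wallisTerm_eq]
  positivity

theorem hasSum_wallisTerm {u : ℝ} (hu : 0 < u) :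
    HasSum (fun j => wallisTerm j u) (exp (-2 * u) * tanhc u) := by
  have hpos := exp_pos (-2 * u)
  have hlt : exp (-2 * u) < 1 := exp_lt_one_iff.2 (by linarith)
  have htanh : tanh u = (1 - exp (-2 * u)) / (1 + exp (-2 * u)) :=
    eq_div_of_mul_eq (by positivity) (by linarith [one_sub_tanh u])
  have hval : exp (-2 * u) * tanhc u =
      u⁻¹ * (exp (-2 * u) * (1 - exp (-2 * u)) ^ 2) * (1 - exp (-2 * u) ^ 2)⁻¹ := by
    have : 1 - exp (-2 * u) ≠ 0 := by linarith
    rw [tanhc_of_ne_zero hu.ne', htanh,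
      show 1 - exp (-2 * u) ^ 2 = (1 - exp (-2 * u)) * (1 + exp (-2 * u)) by ring]
    field_simp
  simp only [wallisTerm_eq, hval]
  exact (hasSum_geometric_of_lt_one (sq_nonneg _)
    (pow_lt_one₀ hpos.le hlt two_ne_zero)).mul_left _

theorem integrableOn_wallisTerm (j : ℕ) : IntegrableOn (wallisTerm j) (Ioi 0) :=
  (integrableOn_frullaniExp (by positivity) (by positivity)).sub
    (integrableOn_frullaniExp (by positivity) (by positivity))

theorem integral_wallisTerm (j : ℕ) :
    ∫ u in Ioi 0, wallisTerm j u =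
      log ((2 * j + 2 : ℝ) / (2 * j + 1) * ((2 * j + 2) / (2 * j + 3))) := by
  simp only [wallisTerm]
  rw [integral_sub (integrableOn_frullaniExp (by positivity) (by positivity))
    (integrableOn_frullaniExp (by positivity) (by positivity)),
    integral_frullaniExp (by positivity) (by positivity),
    integral_frullaniExp (by positivity) (by positivity),
    ← log_div (by positivity) (by positivity)]
  congr 1
  field_simp

theorem hasSum_integral_wallisTerm :
    HasSum (fun j => ∫ u in Ioi 0, wallisTerm j u) (log (π / 2)) := by
  rw [hasSum_iff_tendsto_nat_of_nonneg fun j =>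
    setIntegral_nonneg measurableSet_Ioi fun u hu => wallisTerm_nonneg j (le_of_lt hu)]
  refine (tendsto_prod_pi_div_two.log (by positivity)).congr fun n => ?_
  simp only [integral_wallisTerm]
  exact log_prod fun i _ => by positivity

theorem integral_exp_neg_two_mul_tanhc :
    ∫ u in Ioi 0, exp (-2 * u) * tanhc u = log (π / 2) := by
  have hnorm (j : ℕ) : ∫ u in Ioi 0, ‖wallisTerm j u‖ = ∫ u in Ioi 0, wallisTerm j u :=
    setIntegral_congr_fun measurableSet_Ioi fun u hu =>
      norm_of_nonneg (wallisTerm_nonneg j (le_of_lt hu))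
  have h := hasSum_integral_of_summable_integral_norm integrableOn_wallisTerm
    (by simpa only [hnorm] using hasSum_integral_wallisTerm.summable)
  rw [← h.unique hasSum_integral_wallisTerm]
  exact setIntegral_congr_fun measurableSet_Ioi fun u hu => (hasSum_wallisTerm hu).tsum_eq.symm

theorem integrableOn_exp_neg_two_mul_tanhc :
    IntegrableOn (fun u => exp (-2 * u) * tanhc u) (Ioi 0) := by
  refine integrable_of_isBigO_exp_neg zero_lt_two (by fun_prop) (Asymptotics.isBigO_iff.2 ⟨1, ?_⟩)
  filter_upwards [eventually_ge_atTop 1] with u hu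
  rw [norm_mul, mul_comm]
  gcongr
  rw [tanhc_of_ne_zero (by positivity), norm_div, norm_of_nonneg (by positivity : 0 ≤ u)]
  exact div_le_one_of_le₀ ((abs_tanh_lt_one u).le.trans hu) (by positivity)

theorem tanhc_eq_einKernel_sub (u : ℝ) :
    tanhc u = 2 * einKernel (2 * u) - exp (-2 * u) * tanhc u := by
  obtain rfl | hu := eq_or_ne u 0
  · norm_num [tanhc_zero, einKernel_zero]
  · refine mul_left_cancel₀ hu ?_
    have h := mul_einKernel (2 * u)
    rw [← neg_mul] at h
    linear_combination (1 + exp (-2 * u)) * mul_tanhc u - h - one_sub_tanh u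

theorem tendsto_integral_tanhc_sub_log :
    Tendsto (fun a => (∫ u in 0..a, tanhc u) - log a) atTop
      (𝓝 (log (4 / π) + eulerMascheroniConstant)) := by
  have hein := tendsto_integral_einKernel_sub_log.comp (tendsto_id.const_mul_atTop zero_lt_two)
  have hwallis := intervalIntegral_tendsto_integral_Ioi 0 integrableOn_exp_neg_two_mul_tanhc
    tendsto_id
  have hconst : log (4 / π) + eulerMascheroniConstant =
      log 2 + (eulerMascheroniConstant - log (π / 2)) := by
    rw [show 4 / π = 2 / (π / 2) by ring, log_div two_ne_zero (by positivity)]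
    ring
  rw [integral_exp_neg_two_mul_tanhc] at hwallis
  rw [hconst]
  refine ((hein.sub hwallis).const_add (log 2)).congr' ?_
  filter_upwards [eventually_gt_atTop 0] with a ha
  have hsplit : ∫ u in 0..a, tanhc u =
      2 * (∫ u in 0..a, einKernel (2 * u)) - ∫ u in 0..a, exp (-2 * u) * tanhc u := by
    rw [← intervalIntegral.integral_const_mul, ← intervalIntegral.integral_sub
      (Continuous.intervalIntegrable (by fun_prop) 0 a)
      (Continuous.intervalIntegrable (by fun_prop) 0 a)]
    exact intervalIntegral.integral_congr fun u _ => tanhc_eq_einKernel_sub u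
  rw [hsplit, intervalIntegral.mul_integral_comp_mul_left, mul_zero]
  simp only [Function.comp, id]
  rw [log_mul two_ne_zero ha.ne']
  ring

theorem integral_mul_comp_sq_sub {g : ℝ → ℝ} (hg : Continuous g) (heven : ∀ x, g (-x) = g x)
    {c : ℝ} (hc : 0 ≤ c) : ∫ p in 0..√(2 * c), p * g (p ^ 2 - c) = ∫ x in 0..c, g x := by
  have hint (b d : ℝ) : IntervalIntegrable g volume b d := hg.intervalIntegrable b d
  have hsymm : ∫ x in -c..0, g x = ∫ x in 0..c, g x := by
    simpa [heven] using (intervalIntegral.integral_comp_neg (a := 0) (b := c) g).symm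
  have hderiv (p : ℝ) : HasDerivAt (fun p => p ^ 2 - c) (2 * p) p := by
    simpa using (hasDerivAt_pow 2 p).sub_const c
  have hsub := intervalIntegral.integral_comp_mul_deriv (a := 0) (b := √(2 * c))
    (fun p _ => hderiv p) (by fun_prop) hg
  rw [sq_sqrt (by positivity), show (0 : ℝ) ^ 2 - c = -c by ring, show 2 * c - c = c by ring,
    ← intervalIntegral.integral_add_adjacent_intervals (hint _ 0) (hint 0 _), hsymm] at hsub
  have htwo : ∫ p in 0..√(2 * c), (g ∘ fun p => p ^ 2 - c) p * (2 * p) =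
      2 * ∫ p in 0..√(2 * c), p * g (p ^ 2 - c) := by
    rw [← intervalIntegral.integral_const_mul]
    congr 1
    funext p
    simp only [Function.comp]
    ring
  linarith

theorem intervalIntegrable_div_add_one {b c : ℝ} (hb : 0 ≤ b) (hc : 0 ≤ c) :
    IntervalIntegrable (fun p : ℝ => p / (p + 1)) volume b c := by
  refine (ContinuousOn.div (by fun_prop) (by fun_prop) fun p hp => ?_).intervalIntegrable
  have := (le_min hb hc).trans hp.1
  positivity

theorem integral_div_add_one {b c : ℝ} (hb : 0 ≤ b) (hc : 0 ≤ c) :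
    ∫ p in b..c, p / (p + 1) = c - b - log ((c + 1) / (b + 1)) := by
  have hderiv : ∀ p ∈ uIcc b c, HasDerivAt (fun p => p - log (p + 1)) (p / (p + 1)) p := by
    intro p hp
    have hp₀ : 0 ≤ p := (le_min hb hc).trans hp.1
    have h := (hasDerivAt_id' p).sub (((hasDerivAt_id' p).add_const 1).log (by positivity))
    refine h.congr_deriv ?_
    field_simp
    ring
  rw [intervalIntegral.integral_eq_sub_of_hasDerivAt hderiv (intervalIntegrable_div_add_one hb hc),
    log_div (by positivity) (by positivity)]
  ring

theorem integral_div_add_one_mul_sign {c : ℝ} (hc : 1 ≤ c) :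
    ∫ p in 0..c, p / (p + 1) * Real.sign (p ^ 2 - 1) = c - 2 + 2 * log 2 - log (c + 1) := by
  have hneg : EqOn (fun p : ℝ => -(p / (p + 1)))
      (fun p => p / (p + 1) * Real.sign (p ^ 2 - 1)) (Ioo 0 1) := fun p hp => by
    have : p ^ 2 - 1 < 0 := by nlinarith [hp.1, hp.2]
    simp only [sign_of_neg this, mul_neg_one]
  have hpos : EqOn (fun p : ℝ => p / (p + 1))
      (fun p => p / (p + 1) * Real.sign (p ^ 2 - 1)) (Ioo 1 c) := fun p hp => by
    have : 0 < p ^ 2 - 1 := by nlinarith [hp.1]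
    simp only [sign_of_pos this, mul_one]
  have hc₀ : 0 ≤ c := zero_le_one.trans hc
  rw [← intervalIntegral.integral_add_adjacent_intervals
    ((intervalIntegrable_div_add_one le_rfl zero_le_one).neg.congr_uIoo
      (uIoo_of_le (zero_le_one (α := ℝ)) ▸ hneg))
    ((intervalIntegrable_div_add_one zero_le_one hc₀).congr_uIoo (uIoo_of_le hc ▸ hpos)),
    ← intervalIntegral.integral_congr_Ioo_of_le zero_le_one hneg,
    ← intervalIntegral.integral_congr_Ioo_of_le hc hpos, intervalIntegral.integral_neg,
    integral_div_add_one le_rfl zero_le_one, integral_div_add_one zero_le_one hc₀,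
    log_div (by positivity) (by positivity), log_div (by positivity) (by positivity)]
  rw [zero_add, log_one, one_add_one_eq_two]
  ring

theorem hasDerivAt_log_sub_one_div_add_one {p : ℝ} (hp : 1 < p) :
    HasDerivAt (fun p => log ((p - 1) / (p + 1)) / 2) (p ^ 2 - 1)⁻¹ p := by
  have h₁ : p - 1 ≠ 0 := by linarith
  have h₂ : p + 1 ≠ 0 := by linarith
  have h := ((((hasDerivAt_id' p).sub_const 1).div ((hasDerivAt_id' p).add_const 1) h₂).log
    (div_ne_zero h₁ h₂)).div_const 2
  refine h.congr_deriv ?_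
  rw [show p ^ 2 - 1 = (p - 1) * (p + 1) by ring]
  simp only [Pi.div_apply]
  field_simp
  ring

theorem tendsto_log_sub_one_div_add_one :
    Tendsto (fun p : ℝ => log ((p - 1) / (p + 1)) / 2) atTop (𝓝 0) := by
  have hinv : Tendsto (fun p : ℝ => 2 * (p + 1)⁻¹) atTop (𝓝 0) := by
    simpa using (tendsto_inv_atTop_zero.comp
      (tendsto_atTop_add_const_right atTop (1 : ℝ) tendsto_id)).const_mul 2
  have hquot : Tendsto (fun p : ℝ => (p - 1) / (p + 1)) atTop (𝓝 1) := by
    have h := hinv.const_sub 1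
    rw [sub_zero] at h
    refine h.congr' ?_
    filter_upwards [eventually_gt_atTop 0] with p hp
    field_simp
    ring
  simpa using (hquot.log one_ne_zero).div_const 2

theorem integrableOn_Ioi_inv_sq_sub_one {c : ℝ} (hc : 1 < c) :
    IntegrableOn (fun p : ℝ => (p ^ 2 - 1)⁻¹) (Ioi c) :=
  integrableOn_Ioi_deriv_of_nonneg'
    (fun p hp => hasDerivAt_log_sub_one_div_add_one (hc.trans_le hp))
    (fun p hp => inv_nonneg.2 (by nlinarith [hc.trans hp])) tendsto_log_sub_one_div_add_one

theorem integral_Ioi_inv_sq_sub_one {c : ℝ} (hc : 1 < c) :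
    ∫ p in Ioi c, (p ^ 2 - 1)⁻¹ = log ((c + 1) / (c - 1)) / 2 := by
  rw [integral_Ioi_of_hasDerivAt_of_nonneg'
    (fun p hp => hasDerivAt_log_sub_one_div_add_one (hc.trans_le hp))
    (fun p hp => inv_nonneg.2 (by nlinarith [hc.trans hp])) tendsto_log_sub_one_div_add_one,
    ← inv_div (c - 1), log_inv]
  ring

/-- In units where `μ = 1` and with `a = 1 / (2 * T)`, the radial density `p² (1/K - 1/p²)`. -/
def radialIntegrand (a p : ℝ) : ℝ := a * p ^ 2 * tanhc (a * (p ^ 2 - 1)) - 1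

@[fun_prop]
theorem continuous_radialIntegrand (a : ℝ) : Continuous (radialIntegrand a) := by
  unfold radialIntegrand
  fun_prop

theorem radialIntegrand_eq_add (a : ℝ) {p : ℝ} (hp : p + 1 ≠ 0) :
    radialIntegrand a p =
      p * (a * tanhc (a * (p ^ 2 - 1))) + (p / (p + 1) * tanh (a * (p ^ 2 - 1)) - 1) := by
  rw [radialIntegrand, ← mul_tanhc]
  field_simp
  ring

theorem integral_mul_tanhc_comp_sq_sub_one (a : ℝ) :
    ∫ p in 0..√2, p * (a * tanhc (a * (p ^ 2 - 1))) = ∫ u in 0..a, tanhc u := by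
  have h := integral_mul_comp_sq_sub (g := fun x => a * tanhc (a * x)) (by fun_prop)
    (fun x => by rw [mul_neg, tanhc_neg]) zero_le_one
  rw [mul_one] at h
  rw [h, intervalIntegral.integral_const_mul, intervalIntegral.mul_integral_comp_mul_left, mul_zero,
    mul_one]

-- The cutoff `√2` makes `p ^ 2 - 1` range over the symmetric interval `[-1, 1]`.
theorem intervalIntegral_radialIntegrand (a : ℝ) :
    ∫ p in 0..√2, radialIntegrand a p =
      (∫ u in 0..a, tanhc u) + (∫ p in 0..√2, p / (p + 1) * tanh (a * (p ^ 2 - 1))) - √2 := by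
  have hle : (0 : ℝ) ≤ √2 := sqrt_nonneg 2
  have hint : IntervalIntegrable (fun p : ℝ => p / (p + 1) * tanh (a * (p ^ 2 - 1)))
      volume 0 √2 := (intervalIntegrable_div_add_one le_rfl hle).mul_continuousOn (by fun_prop)
  rw [intervalIntegral.integral_congr_Ioo_of_le hle fun p hp =>
      radialIntegrand_eq_add a (by linarith [hp.1]),
    intervalIntegral.integral_add (Continuous.intervalIntegrable (by fun_prop) _ _)
      (hint.sub intervalIntegrable_const),
    intervalIntegral.integral_sub hint intervalIntegrable_const,
    integral_mul_tanhc_comp_sq_sub_one, integral_one]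
  ring

theorem tendsto_intervalIntegral_radialIntegrand_sub_log :
    Tendsto (fun a => (∫ p in 0..√2, radialIntegrand a p) - log a) atTop
      (𝓝 (log (4 / π) + eulerMascheroniConstant - 2 + 2 * log 2 - log (√2 + 1))) := by
  have hle : (0 : ℝ) ≤ √2 := sqrt_nonneg 2
  have hsign : Tendsto (fun a => ∫ p in 0..√2, p / (p + 1) * tanh (a * (p ^ 2 - 1))) atTop
      (𝓝 (√2 - 2 + 2 * log 2 - log (√2 + 1))) := by
    rw [← integral_div_add_one_mul_sign (one_le_sqrt.2 one_le_two)]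
    simp only [intervalIntegral.integral_of_le hle]
    exact tendsto_integral_mul_tanh ((intervalIntegrable_iff_integrableOn_Ioc_of_le hle).1
      (intervalIntegrable_div_add_one le_rfl hle)) (by fun_prop)
  simp only [intervalIntegral_radialIntegrand]
  convert (tendsto_integral_tanhc_sub_log.add hsign).sub_const √2 using 2 <;> ring

theorem radialIntegrand_eq_sub (a : ℝ) {p : ℝ} (hp : p ^ 2 - 1 ≠ 0) :
    radialIntegrand a p =
      tanh (a * (p ^ 2 - 1)) * (p ^ 2 - 1)⁻¹ - (1 - tanh (a * (p ^ 2 - 1))) := by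
  rw [radialIntegrand, ← mul_tanhc]
  field_simp
  ring

theorem abs_radialIntegrand_le {a p : ℝ} (ha : 1 ≤ a) (hp : 1 < p) :
    |radialIntegrand a p| ≤ (p ^ 2 - 1)⁻¹ := by
  have hx : 0 < p ^ 2 - 1 := by nlinarith
  have hax : 0 < a * (p ^ 2 - 1) := by positivity
  have hlt := tanh_lt_one (a * (p ^ 2 - 1))
  have htanh : 0 ≤ tanh (a * (p ^ 2 - 1)) := by
    rw [tanh_eq_sinh_div_cosh]
    exact div_nonneg (sinh_nonneg_iff.2 hax.le) (cosh_pos _).le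
  have hcompl : 1 - tanh (a * (p ^ 2 - 1)) ≤ (p ^ 2 - 1)⁻¹ :=
    (one_sub_tanh_le_inv hax).trans
      ((inv_le_inv₀ hax hx).2 (le_mul_of_one_le_left hx.le ha))
  rw [radialIntegrand_eq_sub a hx.ne']
  exact abs_sub_le_of_nonneg_of_le (mul_nonneg htanh (by positivity))
    (mul_le_of_le_one_left (by positivity) hlt.le) (sub_nonneg.2 hlt.le) hcompl

theorem integrableOn_Ioi_radialIntegrand {a c : ℝ} (ha : 1 ≤ a) (hc : 1 < c) :
    IntegrableOn (radialIntegrand a) (Ioi c) :=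
  (integrableOn_Ioi_inv_sq_sub_one hc).mono' (by fun_prop) <|
    (ae_restrict_iff' measurableSet_Ioi).2 <| ae_of_all _ fun _ hp =>
      abs_radialIntegrand_le ha (hc.trans hp)

theorem tendsto_integral_Ioi_radialIntegrand {c : ℝ} (hc : 1 < c) :
    Tendsto (fun a => ∫ p in Ioi c, radialIntegrand a p) atTop
      (𝓝 (log ((c + 1) / (c - 1)) / 2)) := by
  rw [← integral_Ioi_inv_sq_sub_one hc]
  refine tendsto_integral_filter_of_dominated_convergence _
    (Eventually.of_forall fun a => by fun_prop) ?_ (integrableOn_Ioi_inv_sq_sub_one hc) ?_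
  · filter_upwards [eventually_ge_atTop 1] with a ha
    exact (ae_restrict_iff' measurableSet_Ioi).2 <| ae_of_all _ fun p hp =>
      abs_radialIntegrand_le ha (hc.trans hp)
  · refine (ae_restrict_iff' measurableSet_Ioi).2 <| ae_of_all _ fun p (hp : c < p) => ?_
    have hx : 0 < p ^ 2 - 1 := by nlinarith
    have h := tendsto_tanh_mul_atTop (p ^ 2 - 1)
    rw [sign_of_pos hx] at h
    simp only [radialIntegrand_eq_sub _ hx.ne']
    simpa using (h.mul_const (p ^ 2 - 1)⁻¹).sub (h.const_sub 1)

theorem integrableOn_radialIntegrand {a : ℝ} (ha : 1 ≤ a) :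
    IntegrableOn (radialIntegrand a) (Ioi 0) := by
  rw [← Ioc_union_Ioi_eq_Ioi zero_le_two]
  exact (continuous_radialIntegrand a).integrableOn_Ioc.union
    (integrableOn_Ioi_radialIntegrand ha one_lt_two)

theorem tendsto_integral_radialIntegrand_sub_log :
    Tendsto (fun a => (∫ p in Ioi 0, radialIntegrand a p) - log a) atTop
      (𝓝 (log (16 / π) + eulerMascheroniConstant - 2)) := by
  have hsqrt : 1 < √2 := one_lt_sqrt_two
  have hfar : log ((√2 + 1) / (√2 - 1)) / 2 = log (√2 + 1) := by
    have : (√2 + 1) / (√2 - 1) = (√2 + 1) ^ 2 := by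
      rw [div_eq_iff (by linarith)]
      linear_combination -(√2 + 1) * sq_sqrt zero_le_two
    rw [this, log_pow]
    norm_num
  have hconst : log (16 / π) = log (4 / π) + 2 * log 2 := by
    rw [show 16 / π = 4 / π * 2 ^ 2 by ring, log_mul (by positivity) (by norm_num), log_pow]
    norm_num
  have h := tendsto_intervalIntegral_radialIntegrand_sub_log.add
    (tendsto_integral_Ioi_radialIntegrand hsqrt)
  rw [hfar] at h
  rw [hconst]
  convert h.congr' ?_ using 2
  · ring
  · filter_upwards [eventually_ge_atTop 1] with a ha
    rw [← intervalIntegral.integral_interval_add_Ioi (b := √2) (integrableOn_radialIntegrand ha)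
      (integrableOn_Ioi_radialIntegrand ha hsqrt)]
    ring

theorem sq_div_sq_add_sq_eq_inv {κ : ℝ} (hκ : κ ≠ 0) (p : ℝ) :
    κ ^ 2 / (p ^ 2 + κ ^ 2) = (1 + (|κ|⁻¹ * p) ^ 2)⁻¹ := by
  rw [mul_pow, inv_pow, sq_abs]
  field_simp
  ring

theorem integrable_sq_div_sq_add_sq (κ : ℝ) :
    Integrable fun p : ℝ => κ ^ 2 / (p ^ 2 + κ ^ 2) := by
  obtain rfl | hκ := eq_or_ne κ 0
  · simp
  · simp only [sq_div_sq_add_sq_eq_inv hκ]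
    exact integrable_inv_one_add_sq.comp_mul_left' (inv_ne_zero (abs_ne_zero.2 hκ))

theorem integral_Ioi_sq_div_sq_add_sq (κ : ℝ) :
    ∫ p in Ioi (0 : ℝ), κ ^ 2 / (p ^ 2 + κ ^ 2) = |κ| * π / 2 := by
  obtain rfl | hκ := eq_or_ne κ 0
  · simp
  · simp only [sq_div_sq_add_sq_eq_inv hκ]
    rw [integral_comp_mul_left_Ioi (fun x => (1 + x ^ 2)⁻¹) 0 (inv_pos.2 (abs_pos.2 hκ)),
      mul_zero, integral_Ioi_inv_one_add_sq, arctan_zero, inv_inv, smul_eq_mul]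
    ring

theorem one_div_Kfun (T μ : ℝ) (p : E3) :
    1 / Kfun T μ p = 1 / (2 * T) * tanhc (1 / (2 * T) * (‖p‖ ^ 2 - μ)) := by
  rw [Kfun]
  split_ifs with h
  · rw [h, sub_self, mul_zero, tanhc_zero, mul_one]
  · rw [mul_tanhc_mul (sub_ne_zero.2 h), one_div_div, div_eq_mul_inv _ (2 * T),
      mul_comm _ (2 * T)⁻¹, ← one_div]
    rcases abs_choice (‖p‖ ^ 2 - μ) with habs | habs <;>
      simp only [habs, mul_neg, tanh_neg, neg_div_neg_eq]

theorem integral_euclideanSpace_fin_three_norm (f : ℝ → ℝ) :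
    ∫ p : E3, f ‖p‖ = 4 * π * ∫ r in Ioi 0, r ^ 2 * f r := by
  have hball : (volume : Measure E3).real (Metric.ball 0 1) = π * 4 / 3 := by
    rw [measureReal_def, EuclideanSpace.volume_ball_fin_three]
    simp [ENNReal.toReal_ofReal (by positivity : 0 ≤ π * 4 / 3)]
  rw [integral_fun_norm_addHaar, finrank_euclideanSpace_fin, hball]
  simp only [nsmul_eq_mul, smul_eq_mul, Nat.add_one_sub_one]
  push_cast
  ring

theorem mFun_div_sqrt (T κ : ℝ) {μ : ℝ} (hμ : 0 < μ) :
    mFun T μ κ / √μ =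
      ∫ p in Ioi 0, (radialIntegrand (μ / (2 * T)) p + κ ^ 2 / (p ^ 2 + κ ^ 2)) := by
  have hsqrt : 0 < √μ := sqrt_pos.2 hμ
  have hscale := integral_comp_mul_left_Ioi (fun r => r ^ 2 *
    (1 / (2 * T) * tanhc (1 / (2 * T) * (r ^ 2 - μ)) - 1 / (r ^ 2 + κ ^ 2 * μ))) 0 hsqrt
  rw [mul_zero, smul_eq_mul] at hscale
  simp only [mFun, one_div_Kfun]
  rw [integral_euclideanSpace_fin_three_norm (fun r =>
    1 / (2 * T) * tanhc (1 / (2 * T) * (r ^ 2 - μ)) - 1 / (r ^ 2 + κ ^ 2 * μ)),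
    ← mul_assoc, one_div_mul_cancel (by positivity), one_mul, div_eq_inv_mul, ← hscale]
  refine setIntegral_congr_fun measurableSet_Ioi fun p (hp : 0 < p) => ?_
  have hp_sq : p ^ 2 + κ ^ 2 ≠ 0 := by positivity
  have harg : 1 / (2 * T) * ((√μ * p) ^ 2 - μ) = μ / (2 * T) * (p ^ 2 - 1) := by
    rw [mul_pow, sq_sqrt hμ.le]
    ring
  simp only [harg]
  rw [mul_pow, sq_sqrt hμ.le, radialIntegrand]
  field_simp
  ring

theorem tendsto_div_two_mul_atTop {ι : Type*} {l : Filter ι} {T μ : ι → ℝ}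
    (h : Tendsto (fun i => T i / μ i) l (𝓝[>] 0)) :
    Tendsto (fun i => μ i / (2 * T i)) l atTop := by
  refine (h.inv_tendsto_nhdsGT_zero.atTop_div_const zero_lt_two).congr fun i => ?_
  simp only [Pi.inv_apply, inv_div]
  ring

theorem mFun_asymptotics_general {ι : Type*} {l : Filter ι} (κ : ι → ℝ) {T μ : ι → ℝ}
    (hμ : ∀ᶠ i in l, 0 < μ i) (hlim : Tendsto (fun i => T i / μ i) l (𝓝[>] 0)) :
    Tendsto (fun i =>
        mFun (T i) (μ i) (κ i) / √(μ i) -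
          (log (μ i / T i) + eulerMascheroniConstant - 2 + log (8 / π) + |κ i| * π / 2))
      l (𝓝 0) := by
  have ha := tendsto_div_two_mul_atTop hlim
  have h := (tendsto_integral_radialIntegrand_sub_log.comp ha).sub_const
    (log (16 / π) + eulerMascheroniConstant - 2)
  rw [sub_self] at h
  refine h.congr' ?_
  filter_upwards [hμ, ha.eventually_ge_atTop 1] with i hμi hai
  have hlog : log (μ i / T i) + log (8 / π) = log (μ i / (2 * T i)) + log (16 / π) := by
    have hpos : 0 < μ i / (2 * T i) := by linarith
    rw [show μ i / T i = 2 * (μ i / (2 * T i)) by ring, show 16 / π = 2 * (8 / π) by ring,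
      log_mul two_ne_zero hpos.ne', log_mul two_ne_zero (by positivity)]
    ring
  rw [mFun_div_sqrt _ _ hμi, integral_add (integrableOn_radialIntegrand hai)
    (integrable_sq_div_sq_add_sq (κ i)).integrableOn, integral_Ioi_sq_div_sq_add_sq]
  simp only [Function.comp]
  linarith

end

/-- In any joint limit with `T/μ → 0`,
`m_μ^{(κ)}(T) = √μ (log(μ/T) + γ − 2 + log(8/π) + κπ/2 + o(1))`. -/
theorem mFun_asymptotics (κ : ℝ) (hκ : 0 < κ)
    (T μ : ℕ → ℝ) (hT : ∀ n, 0 < T n) (hμ : ∀ n, 0 < μ n)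
    (hlim : Tendsto (fun n => T n / μ n) atTop (𝓝 0)) :
    Tendsto (fun n =>
        mFun (T n) (μ n) κ / Real.sqrt (μ n) -
          (Real.log (μ n / T n) + Real.eulerMascheroniConstant - 2 +
            Real.log (8 / Real.pi) + κ * Real.pi / 2))
      atTop (𝓝 0) := by
  have h := mFun_asymptotics_general (fun _ => κ) (Eventually.of_forall hμ)
    (tendsto_nhdsWithin_iff.2 ⟨hlim, Eventually.of_forall fun n => div_pos (hT n) (hμ n)⟩)
  simpa only [abs_of_pos hκ] using h

end
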